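/- Let l and t be coprime odd integers with l > t ≥ 1 and set p' = (l−1)/2. For 1 ≤ j ≤ p', let r(j) be the unique integer with r(j) ≡ (2j−1)t (mod 2l) and −l < r(j) < l, and set r'(j) = (|r(j)|+1)/2. Then r'(j) ∈ {1, …, p'} for every 1 ≤ j ≤ p', and the map j ↦ r'(j) is a bijection of {1, …, p'} onto itself. -/

import Mathlib

open Finset

noncomputable section

/-- The q-Pochhammer symbol `(a; q)_n = ∏_{k=0}^{n-1} (1 - a q^k)`. -/
def qPoch (a q : ℂ) (n : ℕ) : ℂ := ∏ k ∈ Finset.range n, (1 - a * q ^ k)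

/-- The Gaussian binomial coefficient `[n; k]_q` as a polynomial in `q` over `ℤ`,
defined by the q-Pascal rule `[n; k] = [n-1; k-1] + q^k [n-1; k]`.  It is the
polynomial equal to `(q;q)_n / ((q;q)_{n-k} (q;q)_k)`. -/
def gaussPoly : ℕ → ℕ → Polynomial ℤ
  | _, 0 => 1
  | 0, _ + 1 => 0
  | n + 1, k + 1 => gaussPoly n k + Polynomial.X ^ (k + 1) * gaussPoly n (k + 1)

/-- The Gaussian binomial coefficient `[n; k]_q` evaluated at `q : ℂ`. -/
def gbin (q : ℂ) (n k : ℕ) : ℂ := Polynomial.aeval q (gaussPoly n k)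

/-- `σ_j = (-1)^⌊(2j-1)t/l⌋`. -/
def sigmaT (l t j : ℕ) : ℤ := (-1) ^ ((2 * j - 1) * t / l)

/-- `r(j)`: the unique integer with `r(j) ≡ (2j-1)t (mod 2l)` and `-l < r(j) < l`. -/
def rT (l t j : ℕ) : ℤ :=
  if (((2 * j - 1) * t % (2 * l) : ℕ) : ℤ) < (l : ℤ) then (((2 * j - 1) * t % (2 * l) : ℕ) : ℤ)
  else (((2 * j - 1) * t % (2 * l) : ℕ) : ℤ) - 2 * (l : ℤ)

/-- `r'(j) = (|r(j)| + 1)/2`. -/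
def rpT (l t j : ℕ) : ℕ := ((rT l t j).natAbs + 1) / 2

open Classical in
/-- `i_k`: the unique `j ∈ {1, …, (l-1)/2}` with `r'(j) = k`. -/
def iT (l t k : ℕ) : ℕ :=
  if h : ∃ j, j ∈ Finset.Icc 1 ((l - 1) / 2) ∧ rpT l t j = k then h.choose else 0

/-- `ε_{i,j,m}`: `1` if `j ≡ -i, -i-1 (mod 2m)`, `-1` if `j ≡ i, i-1 (mod 2m)`,
`0` otherwise (and `0` when `m ∣ i`, a case excluded in all uses). -/
def epsLO (m i j : ℕ) : ℤ :=
  if m ∣ i then 0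
  else if 2 * m ∣ (i + j) ∨ 2 * m ∣ (i + j + 1) then 1
  else if (2 * (m : ℤ)) ∣ ((j : ℤ) - (i : ℤ)) ∨ (2 * (m : ℤ)) ∣ ((j : ℤ) - (i : ℤ) + 1) then -1
  else 0

/-- `Δ_{i,j,m}`: `1` if `j ≡ -i, -i+1 (mod 2m)`, `-1` if `j ≡ i, i+1 (mod 2m)`,
`0` otherwise (and `0` when `m ∣ i`, a case excluded in all uses). -/
def deltaLO (m i j : ℕ) : ℤ :=
  if m ∣ i then 0
  else if 2 * m ∣ (i + j) ∨ 2 * m ∣ (i + j - 1) then 1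
  else if (2 * (m : ℤ)) ∣ ((j : ℤ) - (i : ℤ)) ∨ (2 * (m : ℤ)) ∣ ((j : ℤ) - (i : ℤ) - 1) then -1
  else 0

/-- `γ_{i,m} = 1` if `i ≡ 1, …, m-1 (mod 2m)` and `-1` otherwise. -/
def gamLO (m i : ℕ) : ℤ :=
  if 1 ≤ i % (2 * m) ∧ i % (2 * m) ≤ m - 1 then 1 else -1

/-- `β_{i,m} = 1` if `i ≡ 1, …, m-1 (mod 2m)`, `-1` if `i ≡ m+1, …, 2m-1 (mod 2m)`,
and `0` if `m ∣ i`. -/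
def betLO (m i : ℕ) : ℤ :=
  if 1 ≤ i % (2 * m) ∧ i % (2 * m) ≤ m - 1 then 1
  else if m + 1 ≤ i % (2 * m) ∧ i % (2 * m) ≤ 2 * m - 1 then -1
  else 0

/-- Extend a tuple `f : Fin P → Fin N` to `n : ℕ → ℕ` with `n i = f (i-1)` for
`1 ≤ i ≤ P` and `n i = 0` otherwise (in particular `n 0 = 0`). -/
def extTup (P N : ℕ) (f : Fin P → Fin N) : ℕ → ℕ :=
  fun i => if h : 1 ≤ i ∧ i ≤ P then (f ⟨i - 1, by omega⟩ : ℕ) else 0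

/-- Takata's exponent `a(n)` (an integer; every integer division below is exact). -/
def aT (l t : ℕ) (n : ℕ → ℕ) : ℤ :=
  -(∑ j ∈ Icc 1 ((l - 1) / 2), (∑ k ∈ Icc (rpT l t j) ((l - 1) / 2),
      (sigmaT l t (iT l t k) + sigmaT l t (iT l t ((l - 1) / 2 + 1 - k))) / 2) *
      ((n j : ℤ) - (n (j - 1) : ℤ)))
  - ∑ j ∈ Icc 1 ((l - 1) / 2 - 1), ((sigmaT l t (j + 1) + sigmaT l t ((l - 1) / 2 + 1 - j)) / 2) * (n j : ℤ)
  - ((sigmaT l t ((l - 1) / 2) + 1) / 2) * (n ((l - 1) / 2) : ℤ)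
  - ∑ j ∈ Icc 1 ((l - 1) / 2), sigmaT l t j

/-- Takata's exponent `b₁(n)` (an integer; every integer division below is exact
whenever the factor it multiplies is nonzero). -/
def b1T (l t : ℕ) (n : ℕ → ℕ) : ℤ :=
  -aT l t n
  + ∑ k ∈ Icc 1 ((l - t) / 2), ((1 - sigmaT l t (iT l t k)) / 2) * (n (iT l t k - 1) : ℤ)
  - ∑ k ∈ Icc ((l - t) / 2 + 1) ((l - 1) / 2), (n (iT l t k - 1) : ℤ)
  + ∑ k ∈ Icc ((l - t) / 2 + 1) ((l - 1) / 2), ((1 + sigmaT l t (iT l t k)) / 2) * (n (iT l t k) : ℤ)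
  - (1 + sigmaT l t ((l - 1) / 2)) * (n ((l - 1) / 2) : ℤ)
  + ∑ j ∈ Icc 1 ((l - 1) / 2 - 1), ((sigmaT l t (j + 1) - sigmaT l t j) / 2) * (n j : ℤ)
  - ∑ k ∈ Icc 1 ((l - 1) / 2 - 1), ∑ k' ∈ Icc (k + 1) ((l - 1) / 2),
      ((1 + Int.sign ((iT l t k : ℤ) - (iT l t k' : ℤ))) / 2) *
        ((sigmaT l t (iT l t k) - sigmaT l t (iT l t k')) / 2) *
        ((n (iT l t k) : ℤ) - (n (iT l t k - 1) : ℤ)) *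
        ((n (iT l t k') : ℤ) - (n (iT l t k' - 1) : ℤ))
  + ∑ j ∈ Icc 1 ((l - 1) / 2), sigmaT l t j *
      (∑ k ∈ Icc 1 (rpT l t j), ((n (iT l t k) : ℤ) - (n (iT l t k - 1) : ℤ))) * (n (j - 1) : ℤ)

/-- Takata's exponent `b₂(n)`. -/
def b2T (l t : ℕ) (n : ℕ → ℕ) : ℤ :=
  if l < 2 * t then
    ∑ k ∈ Icc ((l - t) / 2 + 1) ((t - 1) / 2),
      ((1 + sigmaT l t (iT l t k)) / 2) * (n (iT l t k - 1) : ℤ)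
  else
    -∑ k ∈ Icc ((t + 1) / 2 + 1) ((l - t) / 2),
      ((1 + sigmaT l t (iT l t k)) / 2) * (n (iT l t k - 1) : ℤ)

/-- Takata's `κ(p')`. -/
def kapT (l t N : ℕ) (n : ℕ → ℕ) : ℤ :=
  if sigmaT l t ((l - 1) / 2) = -1 then -(N : ℤ) * (n ((l - 1) / 2) : ℤ) else 0

/-- Takata's `τ(j)`. -/
def tauT (l t : ℕ) (q : ℂ) (n : ℕ → ℕ) (j : ℕ) : ℂ :=
  if sigmaT l t j = -1 then (-1 : ℂ) ^ (n j - n (j - 1))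
  else q ^ ((((n j : ℤ) - (n (j - 1) : ℤ)) * (((n j : ℤ) - (n (j - 1) : ℤ)) + 1)) / 2)

/-- Takata's `X(n)`. -/
def XT (l t N : ℕ) (q : ℂ) (n : ℕ → ℕ) : ℂ :=
  (-1 : ℂ) ^ (n ((l - 1) / 2)) * q ^ kapT l t N n *
    (qPoch q q (N - 1) * qPoch q q (n ((l - 1) / 2)) / qPoch q q (N - n ((l - 1) / 2) - 1)) *
    ∏ j ∈ Icc 1 ((l - 1) / 2), tauT l t q n j / qPoch q q (n j - n (j - 1))

/-- `r(j)` differs from `(2j-1)t` by a multiple of `2l`. -/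
theorem exists_rT_eq (l t j : ℕ) (hj : 1 ≤ j) :
    ∃ k : ℤ, rT l t j = (2 * (j : ℤ) - 1) * t - 2 * l * k := by
  have hmod : (((2 * j - 1) * t % (2 * l) : ℕ) : ℤ) =
      (2 * (j : ℤ) - 1) * t - 2 * l * (((2 * j - 1) * t / (2 * l) : ℕ) : ℤ) := by
    have h := congrArg (Nat.cast : ℕ → ℤ) (Nat.mod_add_div ((2 * j - 1) * t) (2 * l))
    rw [Nat.cast_add, Nat.cast_mul (2 * l), Nat.cast_mul (2 * j - 1),
      Nat.cast_sub (by omega : 1 ≤ 2 * j)] at h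
    push_cast at h ⊢
    linarith
  unfold rT
  split_ifs
  · exact ⟨_, hmod⟩
  · exact ⟨(((2 * j - 1) * t / (2 * l) : ℕ) : ℤ) + 1, by rw [hmod]; ring⟩

/-- `|r(j)| ≤ l`. -/
theorem natAbs_rT_le (l t j : ℕ) (hl : 0 < l) : (rT l t j).natAbs ≤ l := by
  have h := Nat.mod_lt ((2 * j - 1) * t) (by omega : 0 < 2 * l)
  unfold rT
  split_ifs <;> omega

/-- `r(j)` is odd when `t` is odd. -/
theorem odd_rT (l t j : ℕ) (ht : Odd t) (hj : 1 ≤ j) : Odd (rT l t j) := by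
  obtain ⟨k, hk⟩ := exists_rT_eq l t j hj
  rw [hk, mul_assoc]
  exact (Odd.mul ⟨(j : ℤ) - 1, by ring⟩ (by exact_mod_cast ht)).sub_even (even_two_mul _)

/-- `r(j)` is not divisible by `l` for `1 ≤ j ≤ (l-1)/2`. -/
theorem not_dvd_rT (l t j : ℕ) (hco : Nat.Coprime l t) (hj : 1 ≤ j) (hjl : j ≤ (l - 1) / 2) :
    ¬ (l : ℤ) ∣ rT l t j := by
  intro h
  obtain ⟨k, hk⟩ := exists_rT_eq l t j hj
  have hprod : (l : ℤ) ∣ (2 * (j : ℤ) - 1) * t := by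
    have h' := h.add (Dvd.intro (2 * k) rfl : (l : ℤ) ∣ l * (2 * k))
    rwa [hk, show (2 * (j : ℤ) - 1) * t - 2 * l * k + l * (2 * k) = (2 * (j : ℤ) - 1) * t by
      ring] at h'
  have hdvd := (Nat.isCoprime_iff_coprime.mpr hco).dvd_of_dvd_mul_right hprod
  have := Int.le_of_dvd (by omega) hdvd
  omega

/-- `r'` maps `{1, …, (l-1)/2}` into itself. -/
theorem rpT_mem_Icc (l t j : ℕ) (hl : Odd l) (ht : Odd t) (hco : Nat.Coprime l t)
    (hj : 1 ≤ j) (hjl : j ≤ (l - 1) / 2) : 1 ≤ rpT l t j ∧ rpT l t j ≤ (l - 1) / 2 := by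
  have hle := natAbs_rT_le l t j hl.pos
  have hodd := Int.natAbs_odd.mpr (odd_rT l t j ht hj)
  have hne : (rT l t j).natAbs ≠ l := fun h =>
    not_dvd_rT l t j hco hj hjl (Int.natCast_dvd.mpr (dvd_of_eq h.symm))
  obtain ⟨a, ha⟩ := hl
  obtain ⟨b, hb⟩ := hodd
  unfold rpT
  omega

/-- `r'` is injective on `{1, …, (l-1)/2}`. -/
theorem injOn_rpT (l t : ℕ) (ht : Odd t) (hco : Nat.Coprime l t) :
    Set.InjOn (rpT l t) (Set.Icc 1 ((l - 1) / 2)) := by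
  rintro i ⟨hi, hil⟩ j ⟨hj, hjl⟩ hij
  have habs : (rT l t i).natAbs = (rT l t j).natAbs := by
    obtain ⟨a, ha⟩ := Int.natAbs_odd.mpr (odd_rT l t i ht hi)
    obtain ⟨b, hb⟩ := Int.natAbs_odd.mpr (odd_rT l t j ht hj)
    unfold rpT at hij
    omega
  obtain ⟨a, ha⟩ := exists_rT_eq l t i hi
  obtain ⟨b, hb⟩ := exists_rT_eq l t j hj
  have hcoZ : IsCoprime (l : ℤ) t := Nat.isCoprime_iff_coprime.mpr hco
  rcases Int.natAbs_eq_natAbs_iff.mp habs with h | h <;> rw [ha, hb] at h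
  · have hdvd : (l : ℤ) ∣ (i : ℤ) - j :=
      hcoZ.dvd_of_dvd_mul_right ⟨a - b, by linarith⟩
    have := Int.eq_zero_of_abs_lt_dvd hdvd (by rw [abs_lt]; omega)
    omega
  · have hdvd : (l : ℤ) ∣ (i : ℤ) + j - 1 :=
      hcoZ.dvd_of_dvd_mul_right ⟨a + b, by linarith⟩
    have := Int.le_of_dvd (by omega) hdvd
    omega

/-- The map `j ↦ r'(j)` is a bijection of `{1, …, p'}` onto itself. -/
theorem rp_bijOn
    (l t : ℕ) (hl : Odd l) (ht : Odd t) (hco : Nat.Coprime l t)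
    (ht1 : 1 ≤ t) (htl : t < l) :
    (∀ j, 1 ≤ j → j ≤ (l - 1) / 2 → rpT l t j ∈ Finset.Icc 1 ((l - 1) / 2)) ∧
    Set.BijOn (rpT l t) (Set.Icc 1 ((l - 1) / 2)) (Set.Icc 1 ((l - 1) / 2)) := by
  have hmem := fun j => rpT_mem_Icc l t j hl ht hco
  refine ⟨fun j hj hjl => Finset.mem_Icc.mpr (hmem j hj hjl), ?_⟩
  exact ((Set.finite_Icc _ _).injOn_iff_bijOn_of_mapsTo
    fun j hj => hmem j hj.1 hj.2).mp (injOn_rpT l t ht hco)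

end
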